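/- Let (T_n) and T be bounded linear operators on L_p(X,π) such that 0 ≤ T_n ≤ T_{n+1} ≤ T for all n ∈ ℕ, in the sense that for every f ∈ L_p(X,π) with f ≥ 0 π-almost everywhere one has 0 ≤ T_n f ≤ T_{n+1} f ≤ T f π-almost everywhere. If ‖T_n f − T f‖_p → 0 as n → ∞ for every f in the positive cone, and T^i is compact for some i ∈ ℕ, then ρ(T_n) increases monotonically to ρ(T). -/

import Mathlib

open MeasureTheory Filter Topology ENNReal

/-- The spectral radius of a bounded linear operator, via the Gelfand formula
`ρ(K) = lim_n ‖K^n‖^(1/n) = inf_{n ≥ 1} ‖K^n‖^(1/n)`. -/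
noncomputable def specRad {E : Type*} [NormedAddCommGroup E] [NormedSpace ℝ E]
    (K : E →L[ℝ] E) : ℝ := ⨅ n : ℕ, ‖K ^ (n + 1)‖ ^ (1 / (n + 1) : ℝ)

/-!
Suppose `ρ(T_n) < l < ρ(K)` for all `n`, where `K` is the limit operator. For a suitable `f ≥ 0` the
resolvent vectors `y_n = (l - T_n)⁻¹ f` are nonnegative and unbounded, and after normalization they
satisfy `T_n w_n ≤ l w_n` and `l w_n ≤ K w_n + o(1)`. Iterating the second inequality, compactness
of `K ^ i` puts a subsequence of `w_n` into one order interval. For `p < ∞` order intervals of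
`L_p` are weakly compact, being images of order intervals of the Hilbert space `L_2` under
multiplication by a function, and a weak cluster point of `w_n` is a nonzero eigenvector of `K` for
the eigenvalue `l`. So the whole gap between `sup ρ(T_n)` and `ρ(K)` consists of eigenvalues of `K`,
while compactness of `K ^ i` leaves only finitely many of them away from `0`.
-/

section CompactOperator

variable {𝕜 E : Type*} [NontriviallyNormedField 𝕜] [NormedAddCommGroup E] [NormedSpace 𝕜 E]

lemma exists_subseq_tendsto_map_of_isCompactOperator {A : E →L[𝕜] E} (hA : IsCompactOperator A)
    {x : ℕ → E} {R : ℝ} (hx : ∀ n, ‖x n‖ ≤ R) :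
    ∃ v, ∃ φ : ℕ → ℕ, StrictMono φ ∧ Tendsto (fun n => A (x (φ n))) atTop (𝓝 v) := by
  obtain ⟨K, hK, hAK⟩ := IsCompactOperator.image_closedBall_subset_compact
    (f := (A : E →ₗ[𝕜] E)) hA R
  obtain ⟨v, -, φ, hφ, hv⟩ := hK.tendsto_subseq (x := fun n => A (x n))
    fun n => hAK ⟨x n, by simpa using hx n, rfl⟩
  exact ⟨v, φ, hφ, hv⟩

lemma exists_norm_map_sub_lt_of_isCompactOperator {A : E →L[𝕜] E} (hA : IsCompactOperator A)
    {x : ℕ → E} {R c : ℝ} (hx : ∀ n, ‖x n‖ ≤ R) (hc : 0 < c) :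
    ∃ m n, m < n ∧ ‖A (x n) - A (x m)‖ < c := by
  obtain ⟨v, φ, hφ, hv⟩ := exists_subseq_tendsto_map_of_isCompactOperator hA hx
  obtain ⟨N, hN⟩ := Metric.cauchySeq_iff.1 hv.cauchySeq c hc
  refine ⟨φ N, φ (N + 1), hφ N.lt_succ_self, ?_⟩
  simpa only [dist_eq_norm] using hN (N + 1) N.le_succ N le_rfl

lemma exists_mem_norm_le_forall_one_le_norm_sub {c : 𝕜} (hc : 1 < ‖c‖) {R : ℝ} (hR : ‖c‖ < R)
    {V W : Submodule 𝕜 E} (hV : IsClosed (V : Set E)) (hVW : V < W) :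
    ∃ x ∈ W, ‖x‖ ≤ R ∧ ∀ y ∈ V, 1 ≤ ‖x - y‖ := by
  obtain ⟨w, hwW, hwV⟩ := SetLike.exists_of_lt hVW
  obtain ⟨x, hxR, hx⟩ := riesz_lemma_of_norm_lt hc hR (F := V.comap W.subtype)
    (hV.preimage continuous_subtype_val) ⟨⟨w, hwW⟩, hwV⟩
  exact ⟨x, x.2, hxR, fun y hy => hx ⟨y, hVW.le hy⟩ hy⟩

section Eigenvectors

variable {A : E →L[𝕜] E} {l : ℕ → 𝕜} {u : ℕ → E}

lemma map_mem_span_eigenvectors (hu : ∀ n, A (u n) = l n • u n) {n : ℕ} {x : E}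
    (hx : x ∈ Submodule.span 𝕜 (u '' Set.Iio n)) :
    A x ∈ Submodule.span 𝕜 (u '' Set.Iio n) := by
  suffices h : Submodule.span 𝕜 (u '' Set.Iio n) ≤
      (Submodule.span 𝕜 (u '' Set.Iio n)).comap (A : E →ₗ[𝕜] E) from h hx
  rw [Submodule.span_le]
  rintro _ ⟨j, hj, rfl⟩
  simpa [hu] using Submodule.smul_mem _ (l j) (Submodule.subset_span (Set.mem_image_of_mem u hj))

lemma smul_sub_map_mem_span_eigenvectors (hu : ∀ n, A (u n) = l n • u n) {n : ℕ} {x : E}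
    (hx : x ∈ Submodule.span 𝕜 (u '' Set.Iio (n + 1))) :
    l n • x - A x ∈ Submodule.span 𝕜 (u '' Set.Iio n) := by
  suffices h : Submodule.span 𝕜 (u '' Set.Iio (n + 1)) ≤
      (Submodule.span 𝕜 (u '' Set.Iio n)).comap (l n • LinearMap.id - (A : E →ₗ[𝕜] E)) from h hx
  rw [Submodule.span_le]
  rintro _ ⟨j, hj, rfl⟩
  obtain hjn | rfl := (Nat.lt_succ_iff.1 hj).lt_or_eq
  · simpa [hu, ← sub_smul] using Submodule.smul_mem _ (l n - l j)
      (Submodule.subset_span (Set.mem_image_of_mem u (Set.mem_Iio.2 hjn)))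
  · simp [hu]

variable [CompleteSpace 𝕜]

lemma exists_bounded_seq_le_norm_map_sub (hu : ∀ n, A (u n) = l n • u n)
    (hli : LinearIndependent 𝕜 u) {c : ℝ} (hc : 0 < c) (hl : ∀ n, c ≤ ‖l n‖) :
    ∃ (x : ℕ → E) (R : ℝ), (∀ n, ‖x n‖ ≤ R) ∧ ∀ m n, m < n → c ≤ ‖A (x n) - A (x m)‖ := by
  obtain ⟨a, ha⟩ := NormedField.exists_one_lt_norm 𝕜
  let V (n : ℕ) : Submodule 𝕜 E := Submodule.span 𝕜 (u '' Set.Iio n)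
  have hV_mono : Monotone V := fun _ _ hmn =>
    Submodule.span_mono (Set.image_mono (Set.Iio_subset_Iio hmn))
  have hV_lt (n : ℕ) : V n < V (n + 1) := by
    refine (hV_mono n.le_succ).lt_of_not_ge fun h => ?_
    exact hli.notMem_span_image (s := Set.Iio n) (by simp)
      (h (Submodule.subset_span ⟨n, by simp, rfl⟩))
  have hV_closed (n : ℕ) : IsClosed (V n : Set E) :=
    have := FiniteDimensional.span_of_finite 𝕜 ((Set.finite_Iio n).image u)
    Submodule.closed_of_finiteDimensional _
  choose x hxV hxR hx using fun n =>
    exists_mem_norm_le_forall_one_le_norm_sub ha (lt_add_one ‖a‖) (hV_closed n) (hV_lt n)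
  refine ⟨x, ‖a‖ + 1, hxR, fun m n hmn => ?_⟩
  have hln : l n ≠ 0 := norm_pos_iff.1 (hc.trans_le (hl n))
  let y : E := (l n)⁻¹ • (l n • x n - A (x n) + A (x m))
  have hy : y ∈ V n := Submodule.smul_mem _ _ <|
    add_mem (smul_sub_map_mem_span_eigenvectors hu (hxV n))
      (map_mem_span_eigenvectors hu (hV_mono hmn (hxV m)))
  calc c ≤ ‖l n‖ * 1 := by simpa using hl n
    _ ≤ ‖l n‖ * ‖x n - y‖ := by gcongr; exact hx n y hy
    _ = ‖A (x n) - A (x m)‖ := by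
      rw [← norm_smul, smul_sub, smul_inv_smul₀ hln]; congr 1; abel

end Eigenvectors

theorem finite_hasEigenvalue_of_isCompactOperator [CompleteSpace 𝕜] {A : E →L[𝕜] E}
    (hA : IsCompactOperator A) {c : ℝ} (hc : 0 < c) :
    {μ : 𝕜 | c ≤ ‖μ‖ ∧ Module.End.HasEigenvalue (A : E →ₗ[𝕜] E) μ}.Finite := by
  by_contra h_inf
  let l := Set.Infinite.natEmbedding _ h_inf
  choose u hu using fun n => (l n).2.2.exists_hasEigenvector
  have hli : LinearIndependent 𝕜 u := Module.End.eigenvectors_linearIndependent' _ _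
    (Subtype.val_injective.comp l.injective) u hu
  obtain ⟨x, R, hxR, hx⟩ := exists_bounded_seq_le_norm_map_sub
    (fun n => (hu n).apply_eq_smul) hli hc fun n => (l n).2.1
  obtain ⟨m, n, hmn, hlt⟩ := exists_norm_map_sub_lt_of_isCompactOperator hA hxR hc
  exact hlt.not_ge (hx m n hmn)

lemma finite_hasEigenvalue_of_isCompactOperator_pow [CompleteSpace 𝕜] {K : E →L[𝕜] E} {i : ℕ}
    (hi : 0 < i) (hK : IsCompactOperator ⇑(K ^ i)) {c : ℝ} (hc : 0 < c) :
    {μ : 𝕜 | c ≤ ‖μ‖ ∧ Module.End.HasEigenvalue (K : E →ₗ[𝕜] E) μ}.Finite := by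
  have h_fiber (a : 𝕜) : ((· ^ i) ⁻¹' {a} : Set 𝕜).Finite :=
    (Polynomial.nthRoots i a).finite_toSet.subset fun μ hμ => by
      simpa [Polynomial.mem_nthRoots hi] using hμ
  refine ((finite_hasEigenvalue_of_isCompactOperator hK (pow_pos hc i)).preimage'
    fun a _ => h_fiber a).subset fun μ hμ => ⟨?_, ?_⟩
  · simpa only [norm_pow] using pow_le_pow_left₀ hc.le hμ.1 i
  · obtain ⟨v, hv⟩ := hμ.2.exists_hasEigenvector
    refine Module.End.hasEigenvalue_of_hasEigenvector (x := v)
      ⟨Module.End.mem_eigenspace_iff.2 ?_, hv.2⟩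
    simpa using hv.pow_apply i

end CompactOperator

section SpecRad

variable {E : Type*} [NormedAddCommGroup E] [NormedSpace ℝ E] {K : E →L[ℝ] E} {l : ℝ}

lemma specRad_nonneg (K : E →L[ℝ] E) : 0 ≤ specRad K :=
  Real.iInf_nonneg fun _ => by positivity

lemma bddBelow_range_norm_pow_rpow (K : E →L[ℝ] E) :
    BddBelow (Set.range fun n : ℕ => ‖K ^ (n + 1)‖ ^ (1 / (n + 1) : ℝ)) :=
  ⟨0, by rintro _ ⟨n, rfl⟩; positivity⟩

lemma specRad_le_of_norm_pow_le {C : ℝ} (hl : 0 ≤ l) (hC : ∀ k, ‖K ^ k‖ ≤ C * l ^ k) :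
    specRad K ≤ l := by
  let D := max C 1
  have hD : 0 < D := lt_max_of_lt_right one_pos
  have h_le (n : ℕ) : specRad K ≤ D ^ (1 / (n + 1) : ℝ) * l := by
    calc specRad K ≤ ‖K ^ (n + 1)‖ ^ (1 / (n + 1) : ℝ) :=
          ciInf_le (bddBelow_range_norm_pow_rpow K) n
      _ ≤ (D * l ^ (n + 1)) ^ (1 / (n + 1) : ℝ) := by
          gcongr
          exact (hC _).trans (by gcongr; exact le_max_left _ _)
      _ = D ^ (1 / (n + 1) : ℝ) * l := by
          rw [Real.mul_rpow hD.le (by positivity), one_div, ← Nat.cast_add_one,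
            Real.pow_rpow_inv_natCast hl n.succ_ne_zero]
  have h_lim : Tendsto (fun n : ℕ => D ^ (1 / (n + 1) : ℝ) * l) atTop (𝓝 (D ^ (0 : ℝ) * l)) :=
    ((Real.continuousAt_const_rpow hD.ne').tendsto.comp
      tendsto_one_div_add_atTop_nhds_zero_nat).mul_const l
  simpa using ge_of_tendsto' h_lim h_le

lemma exists_norm_inv_smul_pow_lt_one (hl : specRad K < l) :
    ∃ m : ℕ, ‖(l⁻¹ • K) ^ (m + 1)‖ < 1 := by
  have hl₀ : 0 < l := (specRad_nonneg K).trans_lt hl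
  obtain ⟨m, hm⟩ := exists_lt_of_ciInf_lt hl
  refine ⟨m, ?_⟩
  rw [one_div, ← Nat.cast_add_one,
    Real.rpow_inv_lt_iff_of_pos (norm_nonneg _) hl₀.le (by positivity), Real.rpow_natCast] at hm
  rwa [smul_pow, norm_smul, inv_pow, norm_inv, norm_pow, Real.norm_of_nonneg hl₀.le,
    inv_mul_lt_one₀ (by positivity)]

lemma exists_smul_eq_map_add [CompleteSpace E] (hl : specRad K < l) (f : E) :
    ∃ y, l • y = K y + f := by
  have hl₀ : l ≠ 0 := ((specRad_nonneg K).trans_lt hl).ne'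
  obtain ⟨m, hm⟩ := exists_norm_inv_smul_pow_lt_one hl
  obtain ⟨R, hR⟩ := (isUnit_one_sub_of_norm_lt_one hm).exists_right_inv
  let A := l⁻¹ • K
  have hA : (1 - A) * ((∑ j ∈ Finset.range (m + 1), A ^ j) * R) = 1 := by
    rw [← mul_assoc, mul_neg_geom_sum, hR]
  let z := ((∑ j ∈ Finset.range (m + 1), A ^ j) * R) f
  have hz : z - l⁻¹ • K z = f := congrArg (fun B : E →L[ℝ] E => B f) hA
  refine ⟨l⁻¹ • z, ?_⟩
  rw [smul_inv_smul₀ hl₀, map_smul, ← hz, add_sub_cancel]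

end SpecRad

section PositiveOperator

variable {E : Type*} [NormedAddCommGroup E] [NormedSpace ℝ E] [PartialOrder E]
  {S K : E →L[ℝ] E} {l : ℝ}

lemma map_nonneg_of_monotone (hK : Monotone K) {f : E} (hf : 0 ≤ f) : 0 ≤ K f := by
  simpa using hK hf

lemma monotone_pow (hK : Monotone K) (k : ℕ) : Monotone ⇑(K ^ k) := by
  simpa only [FunLike.coe_pow_eq_iterate] using hK.iterate k

lemma pow_apply_le_pow_apply (hS : Monotone S) (hK : Monotone K) (hSK : ∀ f, 0 ≤ f → S f ≤ K f)
    {f : E} (hf : 0 ≤ f) (k : ℕ) : (S ^ k) f ≤ (K ^ k) f := by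
  induction k with
  | zero => simp
  | succ k ih =>
    calc (S ^ (k + 1)) f = S ((S ^ k) f) := by rw [pow_succ', mul_apply_eq_comp]
      _ ≤ K ((S ^ k) f) := hSK _ (map_nonneg_of_monotone (monotone_pow hS k) hf)
      _ ≤ K ((K ^ k) f) := hK ih
      _ = (K ^ (k + 1)) f := by rw [pow_succ', mul_apply_eq_comp]

lemma pow_apply_le_pow_smul [PosSMulMono ℝ E] (hK : Monotone K) (hl : 0 ≤ l) {y : E}
    (hy : K y ≤ l • y) (k : ℕ) : (K ^ k) y ≤ l ^ k • y := by
  induction k with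
  | zero => simp
  | succ k ih =>
    calc (K ^ (k + 1)) y = K ((K ^ k) y) := by rw [pow_succ', mul_apply_eq_comp]
      _ ≤ K (l ^ k • y) := hK ih
      _ = l ^ k • K y := map_smul _ _ _
      _ ≤ l ^ k • l • y := smul_le_smul_of_nonneg_left hy (by positivity)
      _ = l ^ (k + 1) • y := by rw [smul_smul, pow_succ]

lemma exists_pow_smul_le_pow_apply_add [PosSMulMono ℝ E] [IsOrderedAddMonoid E]
    (hK : Monotone K) (hl : 0 ≤ l) (f : E) (k : ℕ) :
    ∃ g, ∀ (w : E) (ε : ℝ), l • w ≤ K w + ε • f → l ^ k • w ≤ (K ^ k) w + ε • g := by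
  induction k with
  | zero => exact ⟨0, fun w ε _ => by simp⟩
  | succ k ih =>
    obtain ⟨g, hg⟩ := ih
    refine ⟨(K ^ k) f + l • g, fun w ε hw => ?_⟩
    calc l ^ (k + 1) • w = l • l ^ k • w := by rw [smul_smul, pow_succ']
      _ ≤ l • ((K ^ k) w + ε • g) := smul_le_smul_of_nonneg_left (hg w ε hw) hl
      _ = (K ^ k) (l • w) + ε • l • g := by rw [smul_add, map_smul, smul_comm l ε]
      _ ≤ (K ^ k) (K w + ε • f) + ε • l • g := by gcongr; exact monotone_pow hK k hw
      _ = (K ^ (k + 1)) w + ε • ((K ^ k) f + l • g) := by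
        rw [map_add, map_smul, pow_succ, mul_apply_eq_comp, smul_add, add_assoc]

lemma nonneg_of_map_le_smul [PosSMulMono ℝ E] [OrderClosedTopology E] (hK : Monotone K)
    (hl : specRad K < l) {y : E} (hy : K y ≤ l • y) : 0 ≤ y := by
  have hl₀ : 0 < l := (specRad_nonneg K).trans_lt hl
  obtain ⟨m, hm⟩ := exists_norm_inv_smul_pow_lt_one hl
  have h_lim : Tendsto (fun k => (((l⁻¹ • K) ^ (m + 1)) ^ k) y) atTop (𝓝 0) := by
    have h := ((ContinuousLinearMap.apply ℝ E y).continuous.tendsto 0).comp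
      (tendsto_pow_atTop_nhds_zero_of_norm_lt_one hm)
    rwa [map_zero] at h
  refine le_of_tendsto' h_lim fun k => ?_
  rw [← pow_mul, smul_pow, inv_pow]
  calc (l ^ ((m + 1) * k))⁻¹ • (K ^ ((m + 1) * k)) y
      ≤ (l ^ ((m + 1) * k))⁻¹ • l ^ ((m + 1) * k) • y :=
        smul_le_smul_of_nonneg_left (pow_apply_le_pow_smul hK hl₀.le hy _) (by positivity)
    _ = y := inv_smul_smul₀ (by positivity) y

lemma monotone_of_map_nonneg [IsOrderedAddMonoid E] (hK : ∀ f, 0 ≤ f → 0 ≤ K f) :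
    Monotone K := fun f g hfg => by
  simpa using hK _ (sub_nonneg.2 hfg)

lemma exists_nonneg_smul_eq_map_add [CompleteSpace E] [IsOrderedAddMonoid E] [PosSMulMono ℝ E]
    [OrderClosedTopology E] (hK : Monotone K) (hl : specRad K < l) {f : E} (hf : 0 ≤ f) :
    ∃ y, 0 ≤ y ∧ l • y = K y + f := by
  obtain ⟨y, hy⟩ := exists_smul_eq_map_add hl f
  exact ⟨y, nonneg_of_map_le_smul hK hl (hy ▸ le_add_of_nonneg_right hf), hy⟩

end PositiveOperator

section BanachLattice

lemma norm_le_norm_of_nonneg_of_le {E : Type*} [NormedAddCommGroup E] [Lattice E]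
    [HasSolidNorm E] [IsOrderedAddMonoid E] {f g : E} (hf : 0 ≤ f) (hfg : f ≤ g) : ‖f‖ ≤ ‖g‖ :=
  norm_le_norm_of_abs_le_abs <| by rwa [abs_of_nonneg hf, abs_of_nonneg (hf.trans hfg)]

variable {E : Type*} [NormedAddCommGroup E] [NormedSpace ℝ E] [Lattice E]
  [IsOrderedAddMonoid E] {S K : E →L[ℝ] E} {l : ℝ}

lemma specRad_le_of_orbits_le [CompleteSpace E] (hl : 0 < l)
    (h_orbit : ∀ f : E, 0 ≤ f → ∃ B, ∀ k, ‖(K ^ k) f‖ ≤ B * l ^ k) : specRad K ≤ l := by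
  have h_norm (k : ℕ) (f : E) : ‖((l ^ k)⁻¹ • K ^ k) f‖ = ‖(K ^ k) f‖ / l ^ k := by
    rw [smul_apply, norm_smul, Real.norm_of_nonneg (by positivity), inv_mul_eq_div]
  obtain ⟨C, hC⟩ := banach_steinhaus (g := fun k : ℕ => (l ^ k)⁻¹ • K ^ k) fun f => by
    obtain ⟨B₁, h₁⟩ := h_orbit f⁺ (posPart_nonneg f)
    obtain ⟨B₂, h₂⟩ := h_orbit f⁻ (negPart_nonneg f)
    refine ⟨B₁ + B₂, fun k => ?_⟩
    rw [h_norm, div_le_iff₀ (by positivity), add_mul, ← posPart_sub_negPart f, map_sub]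
    exact norm_sub_le_of_le (by simpa using h₁ k) (by simpa using h₂ k)
  refine specRad_le_of_norm_pow_le (C := C) hl.le fun k => ?_
  have hCk := hC k
  rwa [norm_smul, Real.norm_of_nonneg (by positivity), inv_mul_le_iff₀ (by positivity),
    mul_comm] at hCk

variable [HasSolidNorm E]

lemma norm_le_norm_of_map_le_map (hS : Monotone S) (hSK : ∀ f, 0 ≤ f → S f ≤ K f) :
    ‖S‖ ≤ ‖K‖ := by
  refine S.opNorm_le_bound (norm_nonneg _) fun f => ?_
  have hS_abs : |S f| ≤ S |f| :=
    abs_le'.2 ⟨hS (le_abs_self f), by simpa using hS (neg_le_abs f)⟩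
  have hS_nonneg : 0 ≤ S |f| := map_nonneg_of_monotone hS (abs_nonneg f)
  calc ‖S f‖ ≤ ‖S |f|‖ := norm_le_norm_of_abs_le_abs (by rwa [abs_of_nonneg hS_nonneg])
    _ ≤ ‖K |f|‖ := norm_le_norm_of_nonneg_of_le hS_nonneg (hSK _ (abs_nonneg f))
    _ ≤ ‖K‖ * ‖|f|‖ := K.le_opNorm _
    _ = ‖K‖ * ‖f‖ := by rw [norm_abs_eq_norm]

lemma specRad_le_specRad (hS : Monotone S) (hK : Monotone K) (hSK : ∀ f, 0 ≤ f → S f ≤ K f) :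
    specRad S ≤ specRad K := by
  refine ciInf_mono (bddBelow_range_norm_pow_rpow S) fun n => ?_
  gcongr
  exact norm_le_norm_of_map_le_map (monotone_pow hS _)
    fun f hf => pow_apply_le_pow_apply hS hK hSK hf _

lemma norm_pow_apply_le_of_smul_eq_map_add [PosSMulMono ℝ E] (hK : Monotone K) (hl : 0 ≤ l)
    {f y : E} (hf : 0 ≤ f) (hy₀ : 0 ≤ y) (hy : l • y = K y + f) (k : ℕ) :
    ‖(K ^ k) f‖ ≤ l ^ (k + 1) * ‖y‖ := by
  have hfy : f ≤ l • y := hy ▸ le_add_of_nonneg_left (map_nonneg_of_monotone hK hy₀)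
  have h_orbit : (K ^ k) f ≤ l ^ (k + 1) • y := by
    calc (K ^ k) f ≤ (K ^ k) (l • y) := monotone_pow hK k hfy
      _ = l • (K ^ k) y := map_smul _ _ _
      _ ≤ l • l ^ k • y := smul_le_smul_of_nonneg_left
          (pow_apply_le_pow_smul hK hl (hy ▸ le_add_of_nonneg_right hf) k) hl
      _ = l ^ (k + 1) • y := by rw [smul_smul, pow_succ']
  calc ‖(K ^ k) f‖ ≤ ‖l ^ (k + 1) • y‖ :=
        norm_le_norm_of_nonneg_of_le (map_nonneg_of_monotone (monotone_pow hK k) hf) h_orbit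
    _ = l ^ (k + 1) * ‖y‖ := by rw [norm_smul, Real.norm_of_nonneg (by positivity)]

end BanachLattice

section WeakTopology

variable {ι E : Type*} [NormedAddCommGroup E] [NormedSpace ℝ E]

lemma isClosed_toWeakSpace_image_of_convex {C : Set E} (hC : Convex ℝ C)
    (hC_closed : IsClosed C) : IsClosed (toWeakSpace ℝ E '' C) := by
  rw [← hC_closed.closure_eq, hC.toWeakSpace_closure ℝ]
  exact isClosed_closure

lemma tendsto_toWeakSpace_of_tendsto {F : Filter ι} {u : ι → E} {w : E} (hu : Tendsto u F (𝓝 w)) :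
    Tendsto (fun n => toWeakSpace ℝ E (u n)) F (𝓝 (toWeakSpace ℝ E w)) :=
  ((toWeakSpaceCLM ℝ E).continuous.tendsto w).comp hu

lemma tendsto_toWeakSpace_map {F : Filter ι} {u : ι → E} {w : E} (K : E →L[ℝ] E)
    (hu : Tendsto (fun n => toWeakSpace ℝ E (u n)) F (𝓝 (toWeakSpace ℝ E w))) :
    Tendsto (fun n => toWeakSpace ℝ E (K (u n))) F (𝓝 (toWeakSpace ℝ E (K w))) :=
  ((WeakSpace.map K).continuous.tendsto (toWeakSpace ℝ E w)).comp hu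

lemma le_of_tendsto_toWeakSpace [PartialOrder E] [IsOrderedAddMonoid E] [PosSMulMono ℝ E]
    [OrderClosedTopology E] {F : Filter ι} [F.NeBot] {x y : ι → E} {a b : E}
    (hx : Tendsto (fun n => toWeakSpace ℝ E (x n)) F (𝓝 (toWeakSpace ℝ E a)))
    (hy : Tendsto (fun n => toWeakSpace ℝ E (y n)) F (𝓝 (toWeakSpace ℝ E b)))
    (hxy : ∀ᶠ n in F, x n ≤ y n) : a ≤ b := by
  have h_sub : Tendsto (fun n => toWeakSpace ℝ E (y n - x n)) F (𝓝 (toWeakSpace ℝ E (b - a))) := by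
    simpa only [map_sub] using hy.sub hx
  obtain ⟨c, hc, hcab⟩ := (isClosed_toWeakSpace_image_of_convex (convex_Ici (0 : E))
    isClosed_Ici).mem_of_tendsto h_sub
    (hxy.mono fun n h => Set.mem_image_of_mem _ (sub_nonneg.2 h))
  rw [← sub_nonneg, ← (toWeakSpace ℝ E).injective hcab]
  exact hc

/-- Weak compactness of all order intervals of an ordered normed space. For a Banach lattice this
is equivalent to order continuity of the norm. -/
def WeaklyCompactOrderIntervals (E : Type*) [NormedAddCommGroup E] [NormedSpace ℝ E]
    [Preorder E] : Prop :=
  ∀ a b : E, IsCompact (toWeakSpace ℝ E '' Set.Icc a b)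

lemma WeaklyCompactOrderIntervals.exists_tendsto [Preorder E] (hE : WeaklyCompactOrderIntervals E)
    {a b : E} {u : ℕ → E} (hu : ∀ n, u n ∈ Set.Icc a b) :
    ∃ w, ∃ U : Ultrafilter ℕ, ↑U ≤ (atTop : Filter ℕ) ∧
      Tendsto (fun n => toWeakSpace ℝ E (u n)) U (𝓝 (toWeakSpace ℝ E w)) := by
  obtain ⟨_, ⟨w, -, rfl⟩, hw⟩ := (hE a b).exists_mapClusterPt (f := atTop)
    (u := fun n => toWeakSpace ℝ E (u n))
    (tendsto_principal.2 (.of_forall fun n => Set.mem_image_of_mem _ (hu n)))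
  obtain ⟨U, hU, hUw⟩ := mapClusterPt_iff_ultrafilter.1 hw
  exact ⟨w, U, hU, hUw⟩

end WeakTopology

lemma tendsto_apply_of_norm_le {E : Type*} [NormedAddCommGroup E] [NormedSpace ℝ E]
    {T : ℕ → E →L[ℝ] E} {C : ℝ} (hC : ∀ n, ‖T n‖ ≤ C) {x : ℕ → E} {a b : E}
    (hx : Tendsto x atTop (𝓝 a)) (ha : Tendsto (fun n => T n a) atTop (𝓝 b)) :
    Tendsto (fun n => T n (x n)) atTop (𝓝 b) := by
  have h_diff : Tendsto (fun n => T n (x n - a)) atTop (𝓝 0) := by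
    refine squeeze_zero_norm (fun n => (T n).le_of_opNorm_le (hC n) _) ?_
    simpa using (tendsto_iff_norm_sub_tendsto_zero.1 hx).const_mul C
  simpa using h_diff.add ha

lemma exists_subseq_bddAbove_of_tendsto {E : Type*} [NormedAddCommGroup E] [CompleteSpace E]
    [Lattice E] [HasSolidNorm E] [IsOrderedAddMonoid E] {z : ℕ → E} {v : E}
    (hz : Tendsto z atTop (𝓝 v)) :
    ∃ φ : ℕ → ℕ, StrictMono φ ∧ BddAbove (Set.range (z ∘ φ)) := by
  obtain ⟨φ, hφ, hφv⟩ : ∃ φ : ℕ → ℕ, StrictMono φ ∧ ∀ n, dist (z (φ n)) v < (1 / 2) ^ n :=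
    extraction_forall_of_eventually fun n =>
      hz.eventually (Metric.ball_mem_nhds v (by positivity : (0 : ℝ) < (1 / 2) ^ n))
  have h_summable : Summable fun n => |z (φ n) - v| :=
    .of_norm_bounded summable_geometric_two fun n => by
      simpa only [norm_abs_eq_norm, dist_eq_norm] using (hφv n).le
  refine ⟨φ, hφ, v + ∑' n, |z (φ n) - v|, ?_⟩
  rintro _ ⟨n, rfl⟩
  calc z (φ n) = v + (z (φ n) - v) := (add_sub_cancel _ _).symm
    _ ≤ v + |z (φ n) - v| := by gcongr; exact le_abs_self _
    _ ≤ v + ∑' n, |z (φ n) - v| := by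
      gcongr
      exact h_summable.le_tsum n fun _ _ => abs_nonneg _

section ApproximateEigenvectors

variable {E : Type*} [NormedAddCommGroup E] [NormedSpace ℝ E] [CompleteSpace E] [Lattice E]
  [HasSolidNorm E] [IsOrderedAddMonoid E] [PosSMulMono ℝ E] {A : E →L[ℝ] E}

lemma exists_subseq_mem_Icc_of_smul_le_map_add (hA : IsCompactOperator A) {r : ℝ} (hr : 0 < r)
    {e w : ℕ → E} (he : Tendsto e atTop (𝓝 0)) (hw₀ : ∀ n, 0 ≤ w n) (hw_norm : ∀ n, ‖w n‖ = 1)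
    (hw : ∀ n, r • w n ≤ A (w n) + e n) :
    ∃ φ : ℕ → ℕ, StrictMono φ ∧ (∃ b, ∀ n, w (φ n) ∈ Set.Icc 0 b) ∧
      ∃ x ≠ 0, Tendsto (fun n => A (w (φ n))) atTop (𝓝 x) := by
  obtain ⟨x, ψ, hψ, hx⟩ := exists_subseq_tendsto_map_of_isCompactOperator hA fun n => (hw_norm n).le
  have hx_add : Tendsto (fun n => A (w (ψ n)) + e (ψ n)) atTop (𝓝 x) := by
    simpa using hx.add (he.comp hψ.tendsto_atTop)
  have hrx : r ≤ ‖x‖ := by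
    refine ge_of_tendsto' hx_add.norm fun n => ?_
    calc r = ‖r • w (ψ n)‖ := by rw [norm_smul, hw_norm, mul_one, Real.norm_of_nonneg hr.le]
      _ ≤ ‖A (w (ψ n)) + e (ψ n)‖ :=
        norm_le_norm_of_nonneg_of_le (smul_nonneg hr.le (hw₀ _)) (hw _)
  obtain ⟨θ, hθ, b, hb⟩ := exists_subseq_bddAbove_of_tendsto hx_add
  refine ⟨ψ ∘ θ, hψ.comp hθ, ⟨r⁻¹ • b, fun n => ⟨hw₀ _, ?_⟩⟩, x,
    norm_pos_iff.1 (hr.trans_le hrx), hx.comp hθ.tendsto_atTop⟩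
  exact (le_inv_smul_iff_of_pos hr).2 ((hw _).trans (hb (Set.mem_range_self n)))

lemma exists_tendsto_toWeakSpace_of_smul_le_map_add (hE : WeaklyCompactOrderIntervals E)
    (hA : IsCompactOperator A) {r : ℝ} (hr : 0 < r) {e w : ℕ → E} (he : Tendsto e atTop (𝓝 0))
    (hw₀ : ∀ n, 0 ≤ w n) (hw_norm : ∀ n, ‖w n‖ = 1) (hw : ∀ n, r • w n ≤ A (w n) + e n) :
    ∃ v ≠ 0, ∃ U : Filter ℕ, U.NeBot ∧ U ≤ atTop ∧
      Tendsto (fun n => toWeakSpace ℝ E (w n)) U (𝓝 (toWeakSpace ℝ E v)) := by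
  obtain ⟨φ, hφ, ⟨b, hb⟩, x, hx₀, hx⟩ :=
    exists_subseq_mem_Icc_of_smul_le_map_add hA hr he hw₀ hw_norm hw
  obtain ⟨v, U, hU, hUv⟩ := hE.exists_tendsto hb
  have hAv : A v = x := (toWeakSpace ℝ E).injective <| tendsto_nhds_unique
    (tendsto_toWeakSpace_map A hUv) (tendsto_toWeakSpace_of_tendsto (hx.mono_left hU))
  refine ⟨v, ?_, Filter.map φ U, inferInstance, hφ.tendsto_atTop.mono_left hU, tendsto_map' hUv⟩
  rintro rfl
  exact hx₀ (by rw [← hAv, map_zero])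

end ApproximateEigenvectors

section MonotoneApproximation

variable {E : Type*} [NormedAddCommGroup E] [NormedSpace ℝ E] [Lattice E]
  [IsOrderedAddMonoid E] {T : ℕ → E →L[ℝ] E} {K : E →L[ℝ] E} {l : ℝ}

/-- The positive operators `T n` increase to `K` in the strong operator topology. Monotonicity in
`n` and convergence are only required on the positive cone, which generates `E`. -/
structure IsMonotoneApproximation {E : Type*} [NormedAddCommGroup E] [NormedSpace ℝ E]
    [PartialOrder E] (T : ℕ → E →L[ℝ] E) (K : E →L[ℝ] E) : Prop where
  monotone : ∀ n, Monotone (T n)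
  monotone_apply : ∀ f, 0 ≤ f → Monotone fun n => T n f
  tendsto_of_nonneg : ∀ f, 0 ≤ f → Tendsto (fun n => T n f) atTop (𝓝 (K f))

namespace IsMonotoneApproximation

lemma tendsto_apply (h : IsMonotoneApproximation T K) (f : E) :
    Tendsto (fun n => T n f) atTop (𝓝 (K f)) := by
  simpa only [← map_sub, posPart_sub_negPart] using
    (h.tendsto_of_nonneg f⁺ (posPart_nonneg f)).sub (h.tendsto_of_nonneg f⁻ (negPart_nonneg f))

variable [HasSolidNorm E]

lemma monotone_limit (h : IsMonotoneApproximation T K) : Monotone K := fun _ _ hfg =>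
  le_of_tendsto_of_tendsto' (h.tendsto_apply _) (h.tendsto_apply _) fun n => h.monotone n hfg

lemma apply_le (h : IsMonotoneApproximation T K) (n : ℕ) {f : E} (hf : 0 ≤ f) : T n f ≤ K f :=
  (h.monotone_apply f hf).ge_of_tendsto (h.tendsto_apply f) n

lemma monotone_specRad (h : IsMonotoneApproximation T K) : Monotone fun n => specRad (T n) :=
  fun m n hmn => specRad_le_specRad (h.monotone m) (h.monotone n)
    fun f hf => h.monotone_apply f hf hmn

lemma specRad_le (h : IsMonotoneApproximation T K) (n : ℕ) : specRad (T n) ≤ specRad K :=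
  specRad_le_specRad (h.monotone n) h.monotone_limit fun _ => h.apply_le n

lemma tendsto_pow_apply (h : IsMonotoneApproximation T K) (k : ℕ) (f : E) :
    Tendsto (fun n => (T n ^ k) f) atTop (𝓝 ((K ^ k) f)) := by
  induction k with
  | zero => simp
  | succ k ih =>
    simp only [pow_succ', mul_apply_eq_comp]
    exact tendsto_apply_of_norm_le
      (fun n => norm_le_norm_of_map_le_map (h.monotone n) fun _ => h.apply_le n) ih
      (h.tendsto_apply _)

variable [PosSMulMono ℝ E]

lemma tendsto_norm_resolvent_atTop (h : IsMonotoneApproximation T K) (hl : 0 < l) {f : E}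
    (hf : 0 ≤ f) (hf_orbit : ∀ B, ∃ k, B * l ^ k < ‖(K ^ k) f‖) {y : ℕ → E} (hy₀ : ∀ n, 0 ≤ y n)
    (hy : ∀ n, l • y n = T n (y n) + f) : Tendsto (fun n => ‖y n‖) atTop atTop := by
  refine tendsto_atTop.2 fun B => ?_
  obtain ⟨k, hk⟩ := hf_orbit (l * B)
  filter_upwards [(h.tendsto_pow_apply k f).norm.eventually_const_lt hk] with n hn
  have h_lt : l ^ (k + 1) * B < l ^ (k + 1) * ‖y n‖ := by
    calc l ^ (k + 1) * B = l * B * l ^ k := by ring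
      _ < ‖(T n ^ k) f‖ := hn
      _ ≤ l ^ (k + 1) * ‖y n‖ :=
        norm_pow_apply_le_of_smul_eq_map_add (h.monotone n) hl.le hf (hy₀ n) (hy n) k
  exact (lt_of_mul_lt_mul_left h_lt (by positivity)).le

variable [CompleteSpace E]

lemma exists_approximate_eigenvectors (h : IsMonotoneApproximation T K)
    (hl : ∀ n, specRad (T n) < l) (hlK : l < specRad K) :
    ∃ (f : E) (ε : ℕ → ℝ) (w : ℕ → E), Tendsto ε atTop (𝓝 0) ∧ (∀ n, 0 ≤ w n) ∧
      (∀ n, ‖w n‖ = 1) ∧ (∀ n, T n (w n) ≤ l • w n) ∧ ∀ n, l • w n ≤ K (w n) + ε n • f := by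
  have hl₀ : 0 < l := (specRad_nonneg _).trans_lt (hl 0)
  obtain ⟨f, hf, hf_orbit⟩ : ∃ f : E, 0 ≤ f ∧ ∀ B, ∃ k, B * l ^ k < ‖(K ^ k) f‖ := by
    contrapose! hlK
    exact specRad_le_of_orbits_le hl₀ hlK
  choose y hy₀ hy using fun n => exists_nonneg_smul_eq_map_add (h.monotone n) (hl n) hf
  have hy_norm := h.tendsto_norm_resolvent_atTop hl₀ hf hf_orbit hy₀ hy
  obtain ⟨N, hN⟩ := eventually_atTop.1 (hy_norm.eventually_gt_atTop 0)
  let ε (n : ℕ) : ℝ := ‖y (n + N)‖⁻¹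
  let w (n : ℕ) : E := ε n • y (n + N)
  have hε₀ (n : ℕ) : 0 ≤ ε n := by positivity
  have hw₀ (n : ℕ) : 0 ≤ w n := smul_nonneg (hε₀ n) (hy₀ _)
  have hw (n : ℕ) : l • w n = T (n + N) (w n) + ε n • f := by
    rw [smul_comm, hy, smul_add, map_smul]
  refine ⟨f, ε, w, (tendsto_inv_atTop_zero.comp hy_norm).comp (tendsto_add_atTop_nat N), hw₀,
    fun n => ?_, fun n => ?_, fun n => ?_⟩
  · rw [norm_smul, norm_inv, norm_norm, inv_mul_cancel₀ (hN _ (Nat.le_add_left N n)).ne']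
  · exact (h.monotone_apply _ (hw₀ n) (Nat.le_add_right n N)).trans
      (hw n ▸ le_add_of_nonneg_right (smul_nonneg (hε₀ n) hf))
  · exact hw n ▸ add_le_add_left (h.apply_le _ (hw₀ n)) _

theorem hasEigenvalue_limit (h : IsMonotoneApproximation T K) (hE : WeaklyCompactOrderIntervals E)
    {i : ℕ} (hi : IsCompactOperator ⇑(K ^ i)) (hl : ∀ n, specRad (T n) < l)
    (hlK : l < specRad K) : Module.End.HasEigenvalue (K : E →ₗ[ℝ] E) l := by
  obtain ⟨f, ε, w, hε, hw₀, hw_norm, hTw, hKw⟩ := h.exists_approximate_eigenvectors hl hlK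
  have hl₀ : 0 < l := (specRad_nonneg _).trans_lt (hl 0)
  obtain ⟨g, hg⟩ := exists_pow_smul_le_pow_apply_add h.monotone_limit hl₀.le f i
  have hεg : Tendsto (fun n => ε n • g) atTop (𝓝 0) := by simpa using hε.smul_const g
  obtain ⟨v, hv, U, hU, hU_top, hwv⟩ := exists_tendsto_toWeakSpace_of_smul_le_map_add hE hi
    (pow_pos hl₀ i) hεg hw₀ hw_norm fun n => hg _ _ (hKw n)
  have hlwv := tendsto_toWeakSpace_map (l • ContinuousLinearMap.id ℝ E) hwv
  have hTv (m : ℕ) : T m v ≤ l • v :=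
    le_of_tendsto_toWeakSpace (tendsto_toWeakSpace_map (T m) hwv) hlwv <|
      hU_top <| (eventually_ge_atTop m).mono fun n hmn =>
        (h.monotone_apply _ (hw₀ n) hmn).trans (hTw n)
  have hKv : K v ≤ l • v := le_of_tendsto' (h.tendsto_apply v) hTv
  have hεf : Tendsto (fun n => ε n • f) U (𝓝 0) := by
    simpa using (hε.mono_left hU_top).smul_const f
  have hlv : l • v ≤ K v := by
    refine le_of_tendsto_toWeakSpace hlwv ?_ (.of_forall hKw)
    simpa using (tendsto_toWeakSpace_map K hwv).add (tendsto_toWeakSpace_of_tendsto hεf)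
  exact Module.End.hasEigenvalue_of_hasEigenvector
    ⟨Module.End.mem_eigenspace_iff.2 (hKv.antisymm hlv), hv⟩

theorem tendsto_specRad (h : IsMonotoneApproximation T K) (hE : WeaklyCompactOrderIntervals E)
    {i : ℕ} (hi₀ : 0 < i) (hi : IsCompactOperator ⇑(K ^ i)) :
    Tendsto (fun n => specRad (T n)) atTop (𝓝 (specRad K)) := by
  have h_bdd : BddAbove (Set.range fun n => specRad (T n)) :=
    ⟨specRad K, Set.forall_mem_range.2 h.specRad_le⟩
  let s := ⨆ n, specRad (T n)
  have hs (n : ℕ) : specRad (T n) ≤ s := le_ciSup h_bdd n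
  suffices hsK : s = specRad K from hsK ▸ tendsto_atTop_ciSup h.monotone_specRad h_bdd
  refine (ciSup_le h.specRad_le).antisymm (le_of_not_gt fun (h_gap : s < specRad K) => ?_)
  obtain ⟨c, hsc, hcK⟩ := exists_between h_gap
  have hc : 0 < c := (specRad_nonneg _).trans_lt ((hs 0).trans_lt hsc)
  refine Set.Ioo_infinite hcK ((finite_hasEigenvalue_of_isCompactOperator_pow hi₀ hi hc).subset
    fun l hl => ⟨hl.1.le.trans (Real.le_norm_self l), ?_⟩)
  exact h.hasEigenvalue_limit hE hi (fun n => (hs n).trans_lt (hsc.trans hl.1)) hl.2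

end IsMonotoneApproximation

end MonotoneApproximation

theorem monotone_specRad_convergence_general {E : Type*} [NormedAddCommGroup E] [NormedSpace ℝ E]
    [CompleteSpace E] [Lattice E] [HasSolidNorm E] [IsOrderedAddMonoid E] [PosSMulMono ℝ E]
    (hE : WeaklyCompactOrderIntervals E) (T : ℕ → E →L[ℝ] E) (K : E →L[ℝ] E)
    (h : IsMonotoneApproximation T K) (h_compact : ∃ i : ℕ, 0 < i ∧ IsCompactOperator ⇑(K ^ i)) :
    Monotone (fun n => specRad (T n)) ∧
      Tendsto (fun n => specRad (T n)) atTop (𝓝 (specRad K)) :=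
  have ⟨_, hi₀, hi⟩ := h_compact
  ⟨h.monotone_specRad, h.tendsto_specRad hE hi₀ hi⟩

section WeakCompactness

lemma surjective_inclusionInDoubleDual {H : Type*} [NormedAddCommGroup H] [InnerProductSpace ℝ H]
    [CompleteSpace H] : Function.Surjective (NormedSpace.inclusionInDoubleDual ℝ H) := by
  intro Ψ
  let J := InnerProductSpace.toDual ℝ H
  let x : H := J.symm (Ψ.comp J.toLinearIsometry.toContinuousLinearMap)
  refine ⟨x, ContinuousLinearMap.ext fun φ => ?_⟩
  calc φ x = inner ℝ (J.symm φ) x := InnerProductSpace.toDual_symm_apply.symm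
    _ = inner ℝ x (J.symm φ) := real_inner_comm _ _
    _ = Ψ (J (J.symm φ)) := InnerProductSpace.toDual_symm_apply
    _ = Ψ φ := by rw [J.apply_symm_apply]

theorem isCompact_toWeakSpace_image_of_convex {H : Type*} [NormedAddCommGroup H]
    [InnerProductSpace ℝ H] [CompleteSpace H] {C : Set H} (hC : Convex ℝ C) (hC_closed : IsClosed C)
    (hC_bdd : Bornology.IsBounded C) : IsCompact (toWeakSpace ℝ H '' C) := by
  rw [← (isClosed_toWeakSpace_image_of_convex hC hC_closed).closure_eq]
  refine NormedSpace.isCompact_closure_of_isBounded ℝ H _ ?_ fun Ψ _ => ?_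
  · rwa [Set.preimage_image_eq _ (toWeakSpace ℝ H).injective]
  · obtain ⟨x, hx⟩ := surjective_inclusionInDoubleDual (WeakDual.toStrongDual Ψ)
    exact ⟨toWeakSpace ℝ H x, hx⟩

lemma continuousOn_toWeakSpace_of_convexOn {H E : Type*} [NormedAddCommGroup H] [NormedSpace ℝ H]
    [NormedAddCommGroup E] [NormedSpace ℝ E] {C : Set H} (hC : IsClosed C) {F : H → E}
    (hF : ContinuousOn F C) (hF_convex : ∀ φ : StrongDual ℝ E, ConvexOn ℝ C (φ ∘ F)) :
    ContinuousOn (fun x => toWeakSpace ℝ E (F ((toWeakSpace ℝ H).symm x)))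
      (toWeakSpace ℝ H '' C) := by
  -- Convex sublevel sets are weakly closed, so `φ ∘ F` and `-φ ∘ F` are both weakly lower
  -- semicontinuous.
  have h_lsc (φ : StrongDual ℝ E) : LowerSemicontinuousOn
      (fun x => φ (F ((toWeakSpace ℝ H).symm x))) (toWeakSpace ℝ H '' C) := by
    refine lowerSemicontinuousOn_iff_preimage_Iic.2 fun r =>
      ⟨toWeakSpace ℝ H '' {x ∈ C | φ (F x) ≤ r},
        isClosed_toWeakSpace_image_of_convex ((hF_convex φ).convex_le r) ?_, ?_⟩
    · exact (φ.continuous.comp_continuousOn hF).preimage_isClosed_of_isClosed hC isClosed_Iic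
    · rw [LinearEquiv.image_eq_preimage_symm, LinearEquiv.image_eq_preimage_symm]
      ext x
      simp
  have h_cont (φ : StrongDual ℝ E) : ContinuousOn
      (fun x => φ (F ((toWeakSpace ℝ H).symm x))) (toWeakSpace ℝ H '' C) :=
    continuousOn_iff_lower_upperSemicontinuousOn.2
      ⟨h_lsc φ, by simpa [Pi.neg_def] using (h_lsc (-φ)).neg⟩
  exact continuousOn_iff_continuous_domRestrict.2 <|
    WeakBilin.continuous_of_continuous_eval _ fun φ => (h_cont φ).domRestrict

end WeakCompactness

section Lp

lemma mem_Icc_neg_abs_iff {G : Type*} [AddCommGroup G] [Lattice G] [IsOrderedAddMonoid G]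
    {f g : G} : f ∈ Set.Icc (-|g|) |g| ↔ |f| ≤ |g| := by
  rw [Set.mem_Icc, abs_le', and_comm, neg_le]

variable {X : Type*} [MeasurableSpace X] {μ : Measure X} {p q : ℝ≥0∞}

lemma Lp_abs_le_abs_iff {f g : Lp ℝ p μ} : |f| ≤ |g| ↔ ∀ᵐ x ∂μ, |f x| ≤ |g x| := by
  rw [← Lp.coeFn_le]
  refine Filter.eventually_congr ?_
  filter_upwards [Lp.coeFn_abs f, Lp.coeFn_abs g] with x hf hg
  rw [hf, hg]

instance instPosSMulMonoLp : PosSMulMono ℝ (Lp ℝ p μ) where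
  smul_le_smul_of_nonneg_left c hc f g hfg := by
    rw [← Lp.coeFn_le] at hfg ⊢
    filter_upwards [hfg, Lp.coeFn_smul c f, Lp.coeFn_smul c g] with x hx hf hg
    rw [hf, hg]
    exact mul_le_mul_of_nonneg_left hx hc

variable {m : X → ℝ}

section Multiplication

variable {w : Lp ℝ q μ} {W : Lp ℝ p μ}

lemma exists_image_ae_eq_mul (hm : AEStronglyMeasurable m μ)
    (hmw : ∀ᵐ x ∂μ, |m x * w x| = |W x|) {g : Lp ℝ q μ} (hg : |g| ≤ |w|) :
    ∃ f : Lp ℝ p μ, |f| ≤ |W| ∧ ∀ᵐ x ∂μ, f x = m x * g x := by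
  have h_mul : ∀ᵐ x ∂μ, |m x * g x| ≤ |W x| := by
    filter_upwards [Lp_abs_le_abs_iff.1 hg, hmw] with x hgx hWx
    rw [← hWx, abs_mul, abs_mul]
    gcongr
  have h_mem : MemLp (fun x => m x * g x) p μ :=
    (Lp.memLp W).of_le (hm.mul (Lp.aestronglyMeasurable g)) h_mul
  refine ⟨h_mem.toLp, Lp_abs_le_abs_iff.2 ?_, h_mem.coeFn_toLp⟩
  filter_upwards [h_mem.coeFn_toLp, h_mul] with x hfx hx
  rwa [hfx]

lemma exists_preimage_ae_eq_mul (hm : AEStronglyMeasurable m μ)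
    (hmw : ∀ᵐ x ∂μ, |m x * w x| = |W x|) {f : Lp ℝ p μ} (hf : |f| ≤ |W|) :
    ∃ g : Lp ℝ q μ, |g| ≤ |w| ∧ ∀ᵐ x ∂μ, f x = m x * g x := by
  have hfW : ∀ᵐ x ∂μ, |f x| ≤ |m x * w x| := by
    filter_upwards [Lp_abs_le_abs_iff.1 hf, hmw] with x hx hWx using hx.trans_eq hWx.symm
  have h_div : ∀ᵐ x ∂μ, |f x / m x| ≤ |w x| := by
    filter_upwards [hfW] with x hx
    rw [abs_div]
    refine div_le_of_le_mul₀ (abs_nonneg _) (abs_nonneg _) ?_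
    rwa [← abs_mul, mul_comm]
  have h_mem : MemLp (fun x => f x / m x) q μ :=
    (Lp.memLp w).of_le ((Lp.aestronglyMeasurable f).div₀ hm) h_div
  refine ⟨h_mem.toLp, Lp_abs_le_abs_iff.2 ?_, ?_⟩
  · filter_upwards [h_mem.coeFn_toLp, h_div] with x hgx hx
    rwa [hgx]
  · filter_upwards [h_mem.coeFn_toLp, hfW] with x hgx hx
    rw [hgx]
    exact (mul_div_cancel_of_imp' fun hmx => by simpa [hmx] using hx).symm

end Multiplication

variable [Fact (1 ≤ p)]

lemma tendsto_Lp_of_dominated (hp : p ≠ ∞) {f : ℕ → Lp ℝ p μ} {g W : Lp ℝ p μ}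
    (hfW : ∀ n, |f n| ≤ |W|) (hfg : ∀ᵐ x ∂μ, Tendsto (fun n => f n x) atTop (𝓝 (g x))) :
    Tendsto f atTop (𝓝 g) := by
  have hfW_indicator (n : ℕ) (s : Set X) :
      eLpNorm (s.indicator (f n)) p μ ≤ eLpNorm (s.indicator W) p μ := by
    refine eLpNorm_mono_ae ?_
    filter_upwards [Lp_abs_le_abs_iff.1 (hfW n)] with x hx
    simp only [norm_indicator_eq_indicator_norm]
    exact Set.indicator_le_indicator hx
  have hUI : UnifIntegrable (fun n => f n) p μ := fun ε hε =>
    have ⟨δ, hδ, h⟩ := (Lp.memLp W).eLpNorm_indicator_le Fact.out hp hε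
    ⟨δ, hδ, fun n s hs hsδ => (hfW_indicator n s).trans (h s hs hsδ)⟩
  have hUT : UnifTight (fun n => f n) p μ := fun ε hε =>
    have ⟨s, hs, h⟩ := unifTight_const (ι := Unit) hp (Lp.memLp W) hε
    ⟨s, hs, fun n => (hfW_indicator n sᶜ).trans (h ())⟩
  exact (Lp.tendsto_Lp_iff_tendsto_eLpNorm' f g).2 <|
    tendsto_Lp_of_tendsto_ae Fact.out hp (fun n => Lp.aestronglyMeasurable (f n)) (Lp.memLp g)
      hUI hUT hfg

lemma convexOn_comp_of_ae_eq_mul {C : Set (Lp ℝ q μ)} {F : Lp ℝ q μ → Lp ℝ p μ}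
    (hC : Convex ℝ C) (hF : ∀ g ∈ C, ∀ᵐ x ∂μ, F g x = m x * g x)
    (φ : StrongDual ℝ (Lp ℝ p μ)) : ConvexOn ℝ C (φ ∘ F) := by
  refine ⟨hC, fun g hg h hh a b ha hb hab => le_of_eq ?_⟩
  have hF_comb : F (a • g + b • h) = a • F g + b • F h := by
    refine Lp.ext ?_
    filter_upwards [hF _ (hC hg hh ha hb hab), hF g hg, hF h hh, Lp.coeFn_add (a • g) (b • h),
      Lp.coeFn_smul a g, Lp.coeFn_smul b h, Lp.coeFn_add (a • F g) (b • F h),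
      Lp.coeFn_smul a (F g), Lp.coeFn_smul b (F h)] with x hF_comb hFg hFh h_add h_smul_g
      h_smul_h hF_add hF_smul_g hF_smul_h
    simp only [hF_comb, hFg, hFh, h_add, h_smul_g, h_smul_h, hF_add, hF_smul_g, hF_smul_h,
      Pi.add_apply, Pi.smul_apply, smul_eq_mul]
    ring
  simp only [Function.comp_apply, hF_comb, map_add, map_smul]

lemma continuousOn_of_ae_eq_mul [Fact (1 ≤ q)] (hp : p ≠ ∞) {C : Set (Lp ℝ q μ)}
    {F : Lp ℝ q μ → Lp ℝ p μ} {W : Lp ℝ p μ} (hFW : ∀ g ∈ C, |F g| ≤ |W|)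
    (hF : ∀ g ∈ C, ∀ᵐ x ∂μ, F g x = m x * g x) : ContinuousOn F C := by
  refine continuousOn_iff_continuous_domRestrict.2 <| SeqContinuous.continuous fun u g hu =>
    tendsto_of_subseq_tendsto fun ns hns => ?_
  have hu_sub : Tendsto (fun n => (u (ns n) : Lp ℝ q μ)) atTop (𝓝 g) :=
    (continuous_subtype_val.tendsto g).comp (hu.comp hns)
  obtain ⟨ms, -, hms⟩ := (tendstoInMeasure_of_tendsto_Lp hu_sub).exists_seq_tendsto_ae
  refine ⟨ms, tendsto_Lp_of_dominated hp (fun n => hFW _ (u _).2) ?_⟩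
  filter_upwards [hms, hF g g.2, ae_all_iff.2 fun n => hF (u (ns (ms n))) (u (ns (ms n))).2]
    with x hx hg hun
  simpa only [Set.domRestrict_apply, Function.comp_apply, hg, hun] using hx.const_mul (m x)

lemma isCompact_toWeakSpace_Icc_L2 (w : Lp ℝ 2 μ) :
    IsCompact (toWeakSpace ℝ (Lp ℝ 2 μ) '' Set.Icc (-|w|) |w|) :=
  isCompact_toWeakSpace_image_of_convex (convex_Icc _ _) isClosed_Icc <|
    isBounded_iff_forall_norm_le.2
      ⟨‖w‖, fun _ hg => norm_le_norm_of_abs_le_abs (mem_Icc_neg_abs_iff.1 hg)⟩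

lemma isCompact_toWeakSpace_Icc_of_mul (hp : p ≠ ∞) (hm : AEStronglyMeasurable m μ)
    {w : Lp ℝ 2 μ} {W : Lp ℝ p μ} (hmw : ∀ᵐ x ∂μ, |m x * w x| = |W x|) :
    IsCompact (toWeakSpace ℝ (Lp ℝ p μ) '' Set.Icc (-|W|) |W|) := by
  let C : Set (Lp ℝ 2 μ) := Set.Icc (-|w|) |w|
  have hC {g : Lp ℝ 2 μ} : g ∈ C ↔ |g| ≤ |w| := mem_Icc_neg_abs_iff
  choose! F hFW hF using fun (g : Lp ℝ 2 μ) (hg : g ∈ C) =>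
    exists_image_ae_eq_mul hm hmw (hC.1 hg)
  have h_image : F '' C = Set.Icc (-|W|) |W| := by
    ext f
    rw [mem_Icc_neg_abs_iff]
    refine ⟨fun ⟨g, hg, hgf⟩ => hgf ▸ hFW g hg, fun hf => ?_⟩
    obtain ⟨g, hg, hfg⟩ := exists_preimage_ae_eq_mul hm hmw hf
    exact ⟨g, hC.2 hg, Lp.ext (EventuallyEq.trans (hF g (hC.2 hg)) (EventuallyEq.symm hfg))⟩
  have h_cont := continuousOn_toWeakSpace_of_convexOn isClosed_Icc
    (continuousOn_of_ae_eq_mul hp hFW hF) (convexOn_comp_of_ae_eq_mul (convex_Icc _ _) hF)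
  have h_compact := (isCompact_toWeakSpace_Icc_L2 w).image_of_continuousOn h_cont
  simpa [Set.image_image, ← h_image] using h_compact

lemma isCompact_toWeakSpace_Icc_neg_abs (hp : p ≠ ∞) (W : Lp ℝ p μ) :
    IsCompact (toWeakSpace ℝ (Lp ℝ p μ) '' Set.Icc (-|W|) |W|) := by
  -- `|W| = |W| ^ (1 - p / 2) * |W| ^ (p / 2)`, where the second factor is in `L²`.
  let r : ℝ := (p / 2).toReal
  have hp₀ : p ≠ 0 := (zero_lt_one.trans_le (Fact.out : 1 ≤ p)).ne'
  have hr : r ≠ 0 := (ENNReal.toReal_pos (by simpa) (ENNReal.div_ne_top hp two_ne_zero)).ne'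
  have hw : MemLp (fun x => ‖W x‖ ^ r) 2 μ := by
    have h := (Lp.memLp W).norm_rpow_div (p / 2)
    rwa [ENNReal.div_div_cancel hp₀ hp] at h
  refine isCompact_toWeakSpace_Icc_of_mul hp (m := fun x => ‖W x‖ ^ (1 - r)) (w := hw.toLp)
    ((Lp.aestronglyMeasurable W).norm.aemeasurable.pow_const _).aestronglyMeasurable ?_
  filter_upwards [hw.coeFn_toLp] with x hx
  rw [hx]
  rcases eq_or_ne (W x) 0 with hWx | hWx
  · simp [hWx, hr]
  · rw [← Real.rpow_add (norm_pos_iff.2 hWx), sub_add_cancel, Real.rpow_one, abs_norm,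
      Real.norm_eq_abs]

theorem weaklyCompactOrderIntervals_Lp (hp : p ≠ ∞) : WeaklyCompactOrderIntervals (Lp ℝ p μ) := by
  intro a b
  let W : Lp ℝ p μ := |a| ⊔ |b|
  have h_subset : Set.Icc a b ⊆ Set.Icc (-|W|) |W| := Set.Icc_subset_Icc
    (neg_le.1 ((neg_le_abs a).trans (le_sup_left.trans (le_abs_self W))))
    ((le_abs_self b).trans (le_sup_right.trans (le_abs_self W)))
  exact (isCompact_toWeakSpace_Icc_neg_abs hp W).of_isClosed_subset
    (isClosed_toWeakSpace_image_of_convex (convex_Icc a b) isClosed_Icc) (Set.image_mono h_subset)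

end Lp

/-- **Monotone spectral continuity.**  Let `(X, F, π)` be a probability space,
`p ∈ [1, ∞)`, and `(T_n)`, `T` bounded linear operators on `L_p(X,π)` with
`0 ≤ T_n ≤ T_{n+1} ≤ T` for all `n` (pointwise π-a.e. on nonnegative
functions).  If `‖T_n f − T f‖_p → 0` for every `f` in the positive cone and
`T^i` is compact for some `i ∈ ℕ`, then `ρ(T_n)` increases monotonically to
`ρ(T)`. -/
theorem monotone_specRad_convergence
    {X : Type*} [MeasurableSpace X] (π : Measure X) [IsProbabilityMeasure π]
    (p : ℝ≥0∞) [Fact (1 ≤ p)] (hp_top : p ≠ ⊤)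
    (T : ℕ → (Lp ℝ p π →L[ℝ] Lp ℝ p π)) (Tlim : Lp ℝ p π →L[ℝ] Lp ℝ p π)
    (h_order : ∀ f : Lp ℝ p π, (∀ᵐ x ∂π, 0 ≤ f x) → ∀ n : ℕ,
      (∀ᵐ x ∂π, 0 ≤ (T n f : X → ℝ) x) ∧
      (∀ᵐ x ∂π, (T n f : X → ℝ) x ≤ (T (n + 1) f : X → ℝ) x) ∧
      (∀ᵐ x ∂π, (T n f : X → ℝ) x ≤ (Tlim f : X → ℝ) x))
    (h_conv : ∀ f : Lp ℝ p π, (∀ᵐ x ∂π, 0 ≤ f x) →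
      Tendsto (fun n => T n f) atTop (𝓝 (Tlim f)))
    (h_evcompact : ∃ i : ℕ, 0 < i ∧ IsCompactOperator ⇑(Tlim ^ i)) :
    Monotone (fun n => specRad (T n)) ∧
      Tendsto (fun n => specRad (T n)) atTop (𝓝 (specRad Tlim)) := by
  have hT_nonneg (n : ℕ) (f : Lp ℝ p π) (hf : 0 ≤ f) : 0 ≤ T n f :=
    (Lp.coeFn_nonneg _).1 (h_order f ((Lp.coeFn_nonneg f).2 hf) n).1
  have h_approx : IsMonotoneApproximation T Tlim :=
    { monotone := fun n => monotone_of_map_nonneg (hT_nonneg n)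
      monotone_apply := fun f hf => monotone_nat_of_le_succ fun n =>
        (Lp.coeFn_le _ _).1 (h_order f ((Lp.coeFn_nonneg f).2 hf) n).2.1
      tendsto_of_nonneg := fun f hf => h_conv f ((Lp.coeFn_nonneg f).2 hf) }
  exact monotone_specRad_convergence_general (weaklyCompactOrderIntervals_Lp hp_top) T Tlim
    h_approx h_evcompact
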